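/- arXiv:1706.08030 — 2 statements merged into one kernel-verified Lean document; each statement's English description precedes it below -/
import Mathlib

section
/- Let A ∈ ℝ^{m×N} satisfy the restricted isometry property of order k with constant δ, 0 ≤ δ < 1, and let n < k. Suppose A⁽⁰⁾, A⁽¹⁾, …, A⁽ⁿ⁾ is a sequence of matrices with A⁽⁰⁾ = A and A⁽ⁱ⁾ ∈ ℝ^{m×(N−i)}, such that for each i < n there is a column index jᵢ of A⁽ⁱ⁾ for which A⁽ⁱ⁺¹⁾ is obtained from A⁽ⁱ⁾ by the deflation step: letting a be the jᵢ-th column of A⁽ⁱ⁾ and P = I − a aᵀ/‖a‖₂², the columns of A⁽ⁱ⁺¹⁾ are P·c for the columns c of A⁽ⁱ⁾ other than the jᵢ-th, in their original order. Then A⁽ⁿ⁾ satisfies the restricted isometry property of order k − n with constant δ; in particular the (k−n)-th order restricted isometry constant of A⁽ⁿ⁾ is at most the k-th order restricted isometry constant of A. -/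
/-!
One deflation step lowers the RIP order by one and keeps the constant. Let `a` be the removed column,
`u` the combination of the other columns with coefficients `v`, and `P` the projection onto the
orthogonal complement of `a`. Then `P u = u - (⟨a, u⟩ / ‖a‖²) a` is itself a combination of columns
of the original matrix, with coefficient vector `w` equal to `v` plus one extra entry at `j`; so the
lower RIP bound for `w` gives `‖P u‖² ≥ (1 - δ) ‖w‖² ≥ (1 - δ) ‖v‖²`. The upper bound is
`‖P u‖² ≤ ‖u‖² ≤ (1 + δ) ‖v‖²`, using the coefficient vector that extends `v` by zero.
The theorem (`stmt8`) follows by induction on the number of steps from `RIPc.deflate`.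
-/

open Matrix Finset

/-- `M` satisfies the restricted isometry property of order `k` with constant `δ`. -/
def RIPc {m p : ℕ} (M : Matrix (Fin m) (Fin p) ℝ) (k : ℕ) (δ : ℝ) : Prop :=
  ∀ v : Fin p → ℝ, (Finset.univ.filter fun i => v i ≠ 0).card ≤ k →
    (1 - δ) * (∑ i, v i ^ 2) ≤ (∑ r, (M.mulVec v r) ^ 2) ∧
    (∑ r, (M.mulVec v r) ^ 2) ≤ (1 + δ) * (∑ i, v i ^ 2)

/-- The deflation step: remove the `j`-th column `a` of `M` and project the remaining
columns (in their original order) by `P = I - a aᵀ / ‖a‖₂²`, the orthogonal projection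
onto the orthogonal complement of `span {a}`. -/
noncomputable def deflate {m p : ℕ} (M : Matrix (Fin m) (Fin (p + 1)) ℝ)
    (j : Fin (p + 1)) : Matrix (Fin m) (Fin p) ℝ :=
  (((1 : Matrix (Fin m) (Fin m) ℝ) -
      Matrix.of fun r c => M r j * M c j / ∑ t, (M t j) ^ 2) * M).submatrix id j.succAbove

/-- With `a` the `j`-th column and `u` the combination of the other columns with coefficients `v`
(written as `M` applied to the extension of `v` by zero), the deflated matrix sends `v` to
`u - (⟨a, u⟩ / ‖a‖²) a`. For `a = 0` this is `u`, since division by zero gives zero. -/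
lemma deflate_mulVec {m p : ℕ} (M : Matrix (Fin m) (Fin (p + 1)) ℝ) (j : Fin (p + 1))
    (v : Fin p → ℝ) (r : Fin m) :
    (deflate M j).mulVec v r =
      M.mulVec (j.insertNth 0 v) r -
        (∑ t, M t j * M.mulVec (j.insertNth 0 v) t) / (∑ t, (M t j) ^ 2) * M r j := by
  have hv : (deflate M j).mulVec v =
      ((1 : Matrix (Fin m) (Fin m) ℝ) -
        Matrix.of fun r c => M r j * M c j / ∑ t, (M t j) ^ 2).mulVec
          (M.mulVec (j.insertNth 0 v)) := by
    rw [Matrix.mulVec_mulVec]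
    ext r
    simp [deflate, Matrix.mulVec, dotProduct, Fin.sum_univ_succAbove _ j]
  rw [hv, Matrix.sub_mulVec, Matrix.one_mulVec, Pi.sub_apply]
  congr 1
  simp only [Matrix.mulVec, dotProduct, Matrix.of_apply, Finset.sum_div, Finset.sum_mul]
  refine Finset.sum_congr rfl fun t _ => ?_
  ring

lemma mulVec_insertNth {m p : ℕ} (M : Matrix (Fin m) (Fin (p + 1)) ℝ) (j : Fin (p + 1))
    (v : Fin p → ℝ) (x : ℝ) (r : Fin m) :
    M.mulVec (j.insertNth x v) r = M.mulVec (j.insertNth 0 v) r + x * M r j := by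
  simp [Matrix.mulVec, dotProduct, Fin.sum_univ_succAbove _ j]
  ring

lemma card_support_insertNth_le {p : ℕ} (j : Fin (p + 1)) (v : Fin p → ℝ) (x : ℝ) :
    (Finset.univ.filter fun i => (j.insertNth x v : Fin (p + 1) → ℝ) i ≠ 0).card ≤
      (Finset.univ.filter fun i => v i ≠ 0).card + 1 := by
  simp only [Finset.card_filter]
  rw [Fin.sum_univ_succAbove _ j]
  simp only [Fin.insertNth_apply_same, Fin.insertNth_apply_succAbove]
  split_ifs <;> omega

/-- Pythagoras: subtracting from `u` its component along `a` does not increase the norm. -/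
lemma sum_sq_sub_proj_le {m : ℕ} (u a : Fin m → ℝ) :
    ∑ r, (u r - (∑ t, a t * u t) / (∑ t, a t ^ 2) * a r) ^ 2 ≤ ∑ r, u r ^ 2 := by
  have expand : ∀ c : ℝ, ∑ r, (u r - c * a r) ^ 2 =
      ∑ r, u r ^ 2 - 2 * c * (∑ t, a t * u t) + c ^ 2 * ∑ t, a t ^ 2 := by
    intro c
    rw [Finset.mul_sum, Finset.mul_sum, ← Finset.sum_sub_distrib, ← Finset.sum_add_distrib]
    refine Finset.sum_congr rfl fun r _ => ?_
    ring
  rw [expand]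
  have hS : 0 ≤ ∑ t, a t ^ 2 := Finset.sum_nonneg fun t _ => sq_nonneg _
  generalize (∑ t, a t ^ 2) = S at *
  generalize (∑ t, a t * u t) = b at *
  rcases hS.eq_or_lt with h | h
  · simp [← h]
  · have e : 2 * (b / S) * b - (b / S) ^ 2 * S = b ^ 2 / S := by
      field_simp
      ring
    have : 0 ≤ b ^ 2 / S := by positivity
    linarith

/-- One deflation step lowers the RIP order by one and keeps the constant. -/
lemma RIPc.deflate {m p k : ℕ} {δ : ℝ} (hδ1 : δ < 1) {M : Matrix (Fin m) (Fin (p + 1)) ℝ}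
    (hM : RIPc M (k + 1) δ) (j : Fin (p + 1)) : RIPc (deflate M j) k δ := by
  intro v hv
  have hcard : ∀ x : ℝ,
      (Finset.univ.filter fun i => (j.insertNth x v : Fin (p + 1) → ℝ) i ≠ 0).card ≤ k + 1 :=
    fun x => (card_support_insertNth_le j v x).trans (by omega)
  have hnorm : ∀ x : ℝ,
      ∑ i, (j.insertNth x v : Fin (p + 1) → ℝ) i ^ 2 = x ^ 2 + ∑ i, v i ^ 2 := by
    intro x
    simp [Fin.sum_univ_succAbove _ j]
  constructor
  · set x : ℝ := -((∑ t, M t j * M.mulVec (j.insertNth 0 v) t) / (∑ t, (M t j) ^ 2)) with hx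
    have h := (hM (j.insertNth x v) (hcard x)).1
    have heq : ∀ r, (_root_.deflate M j).mulVec v r = M.mulVec (j.insertNth x v) r := by
      intro r
      rw [deflate_mulVec, mulVec_insertNth M j v x, hx]
      ring
    simp only [heq]
    rw [hnorm] at h
    nlinarith [mul_nonneg (sub_nonneg.2 hδ1.le) (sq_nonneg x)]
  · have h := (hM (j.insertNth 0 v) (hcard 0)).2
    rw [hnorm] at h
    simp only [deflate_mulVec]
    refine (sum_sq_sub_proj_le (M.mulVec (j.insertNth 0 v)) fun t => M t j).trans ?_
    simpa using h

lemma RIPc.reindex {m p q k : ℕ} {δ : ℝ} (h : p = q) {M : Matrix (Fin m) (Fin p) ℝ}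
    (hM : RIPc M k δ) :
    RIPc (Matrix.reindex (Equiv.refl (Fin m)) (finCongr h) M) k δ := by
  subst h
  simpa using hM

/-- If `A = A⁽⁰⁾, A⁽¹⁾, …, A⁽ⁿ⁾` is a sequence of matrices where each `A⁽ⁱ⁺¹⁾` is
obtained from `A⁽ⁱ⁾` by a deflation step, and `A` satisfies RIP of order `k > n` with
constant `δ`, then `A⁽ⁿ⁾` satisfies RIP of order `k - n` with the same constant `δ`. -/
theorem stmt8 (m N k n : ℕ) (δ : ℝ) (hδ0 : 0 ≤ δ) (hδ1 : δ < 1)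
    (hnk : n < k) (hnN : n ≤ N)
    (A : Matrix (Fin m) (Fin N) ℝ)
    (Aseq : (i : ℕ) → Matrix (Fin m) (Fin (N - i)) ℝ)
    (hA0 : Aseq 0 = A)
    (hRIP : RIPc A k δ)
    (hstep : ∀ i, ∀ _ : i < n, ∃ j : Fin (N - (i + 1) + 1),
      Aseq (i + 1) = deflate
        ((Matrix.reindex (Equiv.refl (Fin m))
          (finCongr (by omega : N - i = N - (i + 1) + 1))) (Aseq i)) j) :
    RIPc (Aseq n) (k - n) δ := by
  have key : ∀ i, i ≤ n → RIPc (Aseq i) (k - i) δ := by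
    intro i
    induction i with
    | zero =>
      intro _
      rw [hA0]
      exact hRIP
    | succ i ih =>
      intro hi
      obtain ⟨j, hj⟩ := hstep i (by omega)
      rw [hj]
      apply RIPc.deflate hδ1
      -- The order `k - i` is `(k - (i + 1)) + 1` because `i + 1 ≤ n < k`.
      rw [show k - (i + 1) + 1 = k - i by omega]
      exact (ih (by omega)).reindex _
  exact key n le_rfl
end

section
/- In the HTP-step setting, suppose additionally that l ∈ S* \ S. Then for every index j ∉ S ∪ S*, the j-th entry of u satisfies |u_j| ≤ (δ + ((1+δ)/γ)·r) · |x*_l|, where r = ‖x*_{S*\(S∪{l})}‖₂ / ‖x*_{S*\{l}}‖₂. -/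
/-!
Let `P` be the orthogonal projection onto the span of the columns `A_i`, `i ∈ S`, and `Q = 1 - P`.
The least-squares residual is `b - A x = Q b`, and `Q` kills the part of `x*` supported on `S`, so
for `j ∉ S ∪ S*`
`u_j = x*_l ⟨Q A_j, Q A_l⟩ + ⟨A_j, Q A v⟩`, with `v` the restriction of `x*` to `S* \ (S ∪ {l})`.

The first inner product is at most `δ` in absolute value (`abs_cross_le`): for `z` supported on
`{l, j}` the vector `Q A z` has the form `A (z - c)` with `c` supported on `S`, hence
`(1 - δ) ‖z‖² ≤ (1 - δ) ‖z - c‖² ≤ ‖Q A z‖² ≤ ‖A z‖² ≤ (1 + δ) ‖z‖²`,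
and polarization with `z = e_l ± e_j` gives the bound. The second is at most `(1 + δ) ‖v‖` by
Cauchy–Schwarz and the upper isometry bound. The dominance condition turns
`‖v‖` into `r |x*_l| / γ`.
-/

open Matrix Finset

/-- The support of a vector, as a `Finset`. -/
noncomputable def suppF {N : ℕ} (x : Fin N → ℝ) : Finset (Fin N) :=
  Finset.univ.filter fun i => x i ≠ 0

/-- The Euclidean norm of the restriction of `v` to the index set `T`. -/
noncomputable def pnorm {N : ℕ} (T : Finset (Fin N)) (v : Fin N → ℝ) : ℝ :=
  Real.sqrt (∑ i ∈ T, v i ^ 2)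

lemma suppF_card_le {N : ℕ} {v : Fin N → ℝ} {T : Finset (Fin N)} (h : ∀ i, i ∉ T → v i = 0) :
    (suppF v).card ≤ T.card := by
  apply Finset.card_le_card
  intro i hi
  by_contra hiT
  simp [suppF, h i hiT] at hi

/-- Extension by zero of a vector indexed by `S`. -/
noncomputable def extendZero {N : ℕ} (S : Finset (Fin N)) (c : {i // i ∈ S} → ℝ) : Fin N → ℝ :=
  fun i => if h : i ∈ S then c ⟨i, h⟩ else 0

lemma mulVec_eq_submatrix_mulVec {m N : ℕ} (A : Matrix (Fin m) (Fin N) ℝ) (S : Finset (Fin N))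
    (z : Fin N → ℝ) (hz : ∀ i, i ∉ S → z i = 0) :
    A *ᵥ z = A.submatrix id ((↑) : {i // i ∈ S} → Fin N) *ᵥ fun i => z i.1 := by
  ext r
  simp only [Matrix.mulVec, dotProduct, Matrix.submatrix_apply, id]
  rw [Finset.sum_coe_sort S (fun i => A r i * z i)]
  symm
  apply Finset.sum_subset (Finset.subset_univ _)
  intro i _ hi
  simp [hz i hi]

lemma mulVec_extendZero {m N : ℕ} (A : Matrix (Fin m) (Fin N) ℝ) (S : Finset (Fin N))
    (c : {i // i ∈ S} → ℝ) :
    A *ᵥ extendZero S c = A.submatrix id ((↑) : {i // i ∈ S} → Fin N) *ᵥ c := by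
  rw [mulVec_eq_submatrix_mulVec A S _ (fun i hi => by simp [extendZero, hi])]
  congr 1
  ext i
  simp [extendZero]

/-- The matrix `1 - B (Bᵀ B)⁻¹ Bᵀ`: when `Bᵀ B` is invertible, the orthogonal projection onto the
complement of the column space of `B`. -/
noncomputable def residualProj {m : ℕ} {ι : Type*} [Fintype ι] [DecidableEq ι]
    (B : Matrix (Fin m) ι ℝ) : Matrix (Fin m) (Fin m) ℝ :=
  1 - B * (Bᵀ * B)⁻¹ * Bᵀ

section residualProj

variable {m : ℕ} {ι : Type*} [Fintype ι] [DecidableEq ι] (B : Matrix (Fin m) ι ℝ)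

lemma residualProj_transpose : (residualProj B)ᵀ = residualProj B := by
  simp [residualProj, Matrix.transpose_mul, Matrix.transpose_nonsing_inv, Matrix.mul_assoc]

lemma residualProj_mul_self (h : IsUnit (Bᵀ * B).det) : residualProj B * B = 0 := by
  rw [residualProj, Matrix.sub_mul, Matrix.one_mul, Matrix.mul_assoc, Matrix.mul_assoc,
    Matrix.nonsing_inv_mul _ h, Matrix.mul_one, sub_self]

lemma residualProj_idem (h : IsUnit (Bᵀ * B).det) :
    residualProj B * residualProj B = residualProj B := by
  have h1 : residualProj B * (1 - B * (Bᵀ * B)⁻¹ * Bᵀ) = residualProj B := by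
    rw [Matrix.mul_sub, ← Matrix.mul_assoc, ← Matrix.mul_assoc, residualProj_mul_self B h]
    simp
  exact h1

lemma residualProj_dot (h : IsUnit (Bᵀ * B).det) (y z : Fin m → ℝ) :
    (residualProj B *ᵥ y) ⬝ᵥ (residualProj B *ᵥ z) = y ⬝ᵥ (residualProj B *ᵥ z) := by
  rw [Matrix.dotProduct_mulVec, ← Matrix.mulVec_transpose, residualProj_transpose,
    Matrix.mulVec_mulVec, residualProj_idem B h, Matrix.dotProduct_mulVec,
    ← Matrix.mulVec_transpose, residualProj_transpose]

lemma residualProj_contract (h : IsUnit (Bᵀ * B).det) (y : Fin m → ℝ) :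
    (residualProj B *ᵥ y) ⬝ᵥ (residualProj B *ᵥ y) ≤ y ⬝ᵥ y := by
  have h1 := residualProj_dot B h y y
  have h2 : 0 ≤ (y - residualProj B *ᵥ y) ⬝ᵥ (y - residualProj B *ᵥ y) :=
    Finset.sum_nonneg fun i _ => mul_self_nonneg _
  rw [sub_dotProduct, dotProduct_sub, dotProduct_sub,
    dotProduct_comm (residualProj B *ᵥ y) y] at h2
  linarith

end residualProj

/-- Restricted isometry of order `k`, phrased with dot products. -/
def RipDot {m N : ℕ} (A : Matrix (Fin m) (Fin N) ℝ) (δ : ℝ) (k : ℕ) : Prop :=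
  ∀ v : Fin N → ℝ, (suppF v).card ≤ k →
    (1 - δ) * (v ⬝ᵥ v) ≤ (A *ᵥ v) ⬝ᵥ (A *ᵥ v) ∧ (A *ᵥ v) ⬝ᵥ (A *ᵥ v) ≤ (1 + δ) * (v ⬝ᵥ v)

section RIP

variable {m N k : ℕ} {A : Matrix (Fin m) (Fin N) ℝ} {δ : ℝ} {S : Finset (Fin N)}

lemma isUnit_gram (hA : RipDot A δ k) (hδ : δ < 1) (hS : S.card ≤ k) :
    IsUnit ((A.submatrix id ((↑) : {i // i ∈ S} → Fin N))ᵀ *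
      A.submatrix id ((↑) : {i // i ∈ S} → Fin N)).det := by
  rw [isUnit_iff_ne_zero]
  intro hdet
  obtain ⟨c, hc, hc0⟩ := Matrix.exists_mulVec_eq_zero_iff.2 hdet
  apply hc
  have h1 := (hA (extendZero S c)
    ((suppF_card_le (T := S) fun i hi => by simp [extendZero, hi]).trans hS)).1
  rw [mulVec_extendZero] at h1
  have h2 : (A.submatrix id ((↑) : {i // i ∈ S} → Fin N) *ᵥ c) ⬝ᵥ
      (A.submatrix id ((↑) : {i // i ∈ S} → Fin N) *ᵥ c) = 0 := by
    rw [Matrix.dotProduct_mulVec, ← Matrix.mulVec_transpose, Matrix.mulVec_mulVec, hc0,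
      zero_dotProduct]
  have h3 : 0 ≤ extendZero S c ⬝ᵥ extendZero S c :=
    Finset.sum_nonneg fun i _ => mul_self_nonneg _
  have h4 : extendZero S c ⬝ᵥ extendZero S c = 0 := by nlinarith
  have h5 := dotProduct_self_eq_zero.1 h4
  ext i
  have := congrFun h5 i.1
  simpa [extendZero] using this

/-- Off `S`, the matrix `Q A` inherits the isometry bounds of `A`. -/
lemma residual_rip (hA : RipDot A δ k) (hδ : δ < 1) {z : Fin N → ℝ} {T : Finset (Fin N)}
    (hT : ∀ i, i ∉ T → z i = 0) (hST : Disjoint S T) (hcard : (S ∪ T).card ≤ k) :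
    let Q := residualProj (A.submatrix id ((↑) : {i // i ∈ S} → Fin N))
    (1 - δ) * (z ⬝ᵥ z) ≤ (Q *ᵥ (A *ᵥ z)) ⬝ᵥ (Q *ᵥ (A *ᵥ z)) ∧
      (Q *ᵥ (A *ᵥ z)) ⬝ᵥ (Q *ᵥ (A *ᵥ z)) ≤ (1 + δ) * (z ⬝ᵥ z) := by
  intro Q
  have hU := isUnit_gram hA hδ ((Finset.card_le_card Finset.subset_union_left).trans hcard)
  constructor
  · set B := A.submatrix id ((↑) : {i // i ∈ S} → Fin N) with hB
    set c := extendZero S ((Bᵀ * B)⁻¹ *ᵥ (Bᵀ *ᵥ (A *ᵥ z))) with hc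
    have hcS : ∀ i, i ∉ S → c i = 0 := fun i hi => by simp [hc, extendZero, hi]
    have hQ : Q *ᵥ (A *ᵥ z) = A *ᵥ (z - c) := by
      rw [Matrix.mulVec_sub, hc, mulVec_extendZero]
      simp only [Q, residualProj, Matrix.sub_mul, Matrix.one_mul, Matrix.sub_mulVec, Matrix.mulVec_mulVec,
        Matrix.mul_assoc, ← hB]
    rw [hQ]
    have h1 := (hA (z - c) ((suppF_card_le (T := S ∪ T) fun i hi => by
      simp only [Finset.mem_union, not_or] at hi
      simp [hcS i hi.1, hT i hi.2]).trans hcard)).1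
    have hzc : z ⬝ᵥ c = 0 := by
      apply Finset.sum_eq_zero
      intro i _
      by_cases hi : i ∈ S
      · simp [hT i (Finset.disjoint_left.1 hST hi)]
      · simp [hcS i hi]
    have h2 : 0 ≤ c ⬝ᵥ c := Finset.sum_nonneg fun i _ => mul_self_nonneg _
    have h3 : (z - c) ⬝ᵥ (z - c) = z ⬝ᵥ z + c ⬝ᵥ c := by
      rw [sub_dotProduct, dotProduct_sub, dotProduct_sub, dotProduct_comm c z, hzc]
      ring
    rw [h3] at h1
    nlinarith
  · exact (residualProj_contract _ hU _).trans
      (hA z ((suppF_card_le hT).trans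
        ((Finset.card_le_card Finset.subset_union_right).trans hcard))).2

lemma abs_cross_le (hA : RipDot A δ k) (hδ : δ < 1) (hk : S.card + 2 ≤ k) {l j : Fin N}
    (hlS : l ∉ S) (hjS : j ∉ S) (hlj : l ≠ j) :
    let Q := residualProj (A.submatrix id ((↑) : {i // i ∈ S} → Fin N))
    |(Q *ᵥ (A *ᵥ Pi.single j 1)) ⬝ᵥ (Q *ᵥ (A *ᵥ Pi.single l 1))| ≤ δ := by
  intro Q
  have key : ∀ t : ℝ, t * t = 1 →
      t * ((Q *ᵥ (A *ᵥ Pi.single j 1)) ⬝ᵥ (Q *ᵥ (A *ᵥ Pi.single l 1))) * 4 ≤ 4 * δ := by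
    intro t ht
    have hdisj : Disjoint S {l, j} := by
      simp [hlS, hjS]
    have hcard : (S ∪ {l, j}).card ≤ k :=
      (Finset.card_union_le _ _).trans (le_trans (by gcongr; exact Finset.card_le_two) hk)
    have hz : ∀ a : ℝ, ∀ i, i ∉ ({l, j} : Finset (Fin N)) →
        (Pi.single l 1 + a • Pi.single j 1 : Fin N → ℝ) i = 0 := by
      intro a i hi
      simp only [Finset.mem_insert, Finset.mem_singleton, not_or] at hi
      simp [hi.1, hi.2]
    have h1 := (residual_rip hA hδ (hz t) hdisj hcard).2
    have h2 := (residual_rip hA hδ (hz (-t)) hdisj hcard).1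
    have hn : ∀ a : ℝ, (Pi.single l 1 + a • Pi.single j 1 : Fin N → ℝ) ⬝ᵥ
        (Pi.single l 1 + a • Pi.single j 1) = 1 + a * a := by
      intro a
      simp [dotProduct_add, hlj, hlj.symm]
    rw [hn] at h1 h2
    simp only [Matrix.mulVec_add, Matrix.mulVec_smul, add_dotProduct, dotProduct_add,
      smul_dotProduct, dotProduct_smul, smul_eq_mul] at h1 h2
    rw [dotProduct_comm (residualProj _ *ᵥ (A *ᵥ Pi.single l 1))
      (residualProj _ *ᵥ (A *ᵥ Pi.single j 1))] at h1 h2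
    simp only [Q]
    linear_combination h1 + h2 + 2 * δ * ht
  rw [abs_le]
  have := key 1 (by norm_num)
  have := key (-1) (by norm_num)
  constructor <;> linarith

/-- Cauchy–Schwarz bound for `⟨A_j, Q A v⟩`. -/
lemma abs_tail_le (hA : RipDot A δ k) (hδ0 : 0 ≤ δ) (hδ : δ < 1) (hS : S.card ≤ k) (hk : 1 ≤ k)
    (j : Fin N) {v : Fin N → ℝ} (hv : (suppF v).card ≤ k) :
    let Q := residualProj (A.submatrix id ((↑) : {i // i ∈ S} → Fin N))
    |(A *ᵥ Pi.single j 1) ⬝ᵥ (Q *ᵥ (A *ᵥ v))| ≤ (1 + δ) * √(v ⬝ᵥ v) := by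
  intro Q
  have hU := isUnit_gram hA hδ hS
  have h1 := (hA (Pi.single j 1) ((suppF_card_le (T := {j}) fun i hi => by
    simp only [Finset.mem_singleton] at hi
    simp [hi]).trans (by simpa using hk))).2
  have h2 := (residualProj_contract _ hU (A *ᵥ v)).trans (hA v hv).2
  have hvv : 0 ≤ v ⬝ᵥ v := Finset.sum_nonneg fun i _ => mul_self_nonneg _
  have hcs := Finset.sum_mul_sq_le_sq_mul_sq Finset.univ (A *ᵥ Pi.single j 1) (Q *ᵥ (A *ᵥ v))
  simp only [pow_two _, dotProduct] at hcs h1 h2 ⊢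
  apply abs_le_of_sq_le_sq _ (by positivity)
  rw [mul_pow, Real.sq_sqrt (by simpa [dotProduct] using hvv)]
  simp [Pi.single_apply] at h1
  refine (le_of_eq (pow_two _)).trans (hcs.trans ?_)
  calc _ ≤ (1 + δ) * ((1 + δ) * ∑ i, v i * v i) := by
        apply mul_le_mul _ h2 (Finset.sum_nonneg fun i _ => mul_self_nonneg _) (by linarith)
        simpa using h1
    _ = _ := by ring

end RIP

/-- HTP step, upper bound on `|u_j|` for `j ∉ S ∪ S*` when `l ∈ S* \ S`. -/
theorem stmt12 (m N s : ℕ) (A : Matrix (Fin m) (Fin N) ℝ) (δ γ : ℝ)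
    (hδ0 : 0 ≤ δ) (hδ1 : δ < 1) (hγ : 0 < γ)
    (hRIP : ∀ v : Fin N → ℝ, (suppF v).card ≤ s + 2 →
      (1 - δ) * (∑ i, v i ^ 2) ≤ (∑ r, (A.mulVec v r) ^ 2) ∧
      (∑ r, (A.mulVec v r) ^ 2) ≤ (1 + δ) * (∑ i, v i ^ 2))
    (xs : Fin N → ℝ) (hxs : (suppF xs).card ≤ s)
    (S : Finset (Fin N)) (hScard : S.card = s)
    (x : Fin N → ℝ)
    (hx0 : ∀ i, i ∉ S → x i = 0)
    (hxls : ∀ i : {i // i ∈ S}, x i.1 =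
      ((((A.submatrix id ((↑) : {i // i ∈ S} → Fin N))ᵀ *
          A.submatrix id ((↑) : {i // i ∈ S} → Fin N))⁻¹ *
        (A.submatrix id ((↑) : {i // i ∈ S} → Fin N))ᵀ).mulVec (A.mulVec xs)) i)
    (l : Fin N) (hl : ∀ i, |xs i| ≤ |xs l|)
    (hne : pnorm ((suppF xs).erase l) xs ≠ 0)
    (hdom : γ * pnorm ((suppF xs).erase l) xs ≤ |xs l|)
    (u : Fin N → ℝ)
    (hu : ∀ j, u j = x j + Aᵀ.mulVec (A.mulVec xs - A.mulVec x) j)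
    (hlmem : l ∈ suppF xs \ S) :
    ∀ j, j ∉ S ∪ suppF xs →
      |u j| ≤ (δ + ((1 + δ) / γ) *
        (pnorm (suppF xs \ insert l S) xs / pnorm ((suppF xs).erase l) xs)) * |xs l| := by
  intro j hj
  have hA : RipDot A δ (s + 2) := by
    intro v hv
    simpa [dotProduct, pow_two] using hRIP v hv
  simp only [Finset.mem_union, not_or] at hj
  obtain ⟨hjS, hjx⟩ := hj
  obtain ⟨hlx, hlS⟩ := Finset.mem_sdiff.1 hlmem
  have hlj : l ≠ j := fun h => hjx (h ▸ hlx)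
  have hU := isUnit_gram (S := S) hA hδ1 (by omega)
  have hcross := abs_cross_le (S := S) hA hδ1 (by omega) hlS hjS hlj
  set v : Fin N → ℝ := fun i => if i ∈ suppF xs \ insert l S then xs i else 0 with hv
  have hvcard : (suppF v).card ≤ s + 2 := by
    refine (suppF_card_le (T := suppF xs) fun i hi => ?_).trans (by omega)
    simp [hv, hi]
  have htail := abs_tail_le (S := S) hA hδ0 hδ1 (by omega) (by omega) j hvcard
  have hnorm : √(v ⬝ᵥ v) = pnorm (suppF xs \ insert l S) xs := by
    rw [pnorm]
    congr 1
    rw [dotProduct, ← Finset.sum_subset (Finset.subset_univ (suppF xs \ insert l S))]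
    · refine Finset.sum_congr rfl fun i hi => ?_
      simp only [hv, if_pos hi, pow_two]
    · intro i _ hi
      simp only [hv, if_neg hi, mul_zero]
  rw [hnorm] at htail
  set B := A.submatrix id ((↑) : {i // i ∈ S} → Fin N) with hB
  simp only at hcross htail
  have hres : A *ᵥ xs - A *ᵥ x = residualProj B *ᵥ (A *ᵥ xs) := by
    rw [mulVec_eq_submatrix_mulVec A S x hx0, funext hxls]
    simp only [residualProj, Matrix.sub_mul, Matrix.one_mul, Matrix.sub_mulVec, Matrix.mulVec_mulVec,
      Matrix.mul_assoc, ← hB]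
  -- Split `xs` into its parts on `S`, on `{l}` and on `S* \ (S ∪ {l})`.
  set w : Fin N → ℝ := fun i => if i ∈ S then xs i else 0 with hw
  have hsplit : xs = w + xs l • Pi.single l 1 + v := by
    ext i
    by_cases hil : i = l
    · subst hil
      simp [hw, hv, hlS]
    · by_cases hiS : i ∈ S
      · simp [hw, hv, hiS, hil]
      · by_cases hi : xs i = 0 <;> simp [hw, hv, hiS, hil, suppF, hi]
  have hw0 : residualProj B *ᵥ (A *ᵥ w) = 0 := by
    rw [mulVec_eq_submatrix_mulVec A S w (fun i hi => by simp [hw, hi]), ← hB,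
      Matrix.mulVec_mulVec, residualProj_mul_self B hU, Matrix.zero_mulVec]
  have huj : u j = xs l * ((residualProj B *ᵥ (A *ᵥ Pi.single j 1)) ⬝ᵥ
        (residualProj B *ᵥ (A *ᵥ Pi.single l 1))) +
      (A *ᵥ Pi.single j 1) ⬝ᵥ (residualProj B *ᵥ (A *ᵥ v)) := by
    have hq : residualProj B *ᵥ (A *ᵥ xs) =
        xs l • (residualProj B *ᵥ (A *ᵥ Pi.single l 1)) + residualProj B *ᵥ (A *ᵥ v) := by
      conv_lhs => rw [hsplit]
      rw [Matrix.mulVec_add, Matrix.mulVec_add, Matrix.mulVec_add, Matrix.mulVec_add, hw0,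
        zero_add, Matrix.mulVec_smul, Matrix.mulVec_smul]
    have hcol : ∀ y : Fin m → ℝ, (Aᵀ *ᵥ y) j = (A *ᵥ Pi.single j 1) ⬝ᵥ y := by
      intro y
      rw [Matrix.mulVec_single_one]
      rfl
    rw [hu, hx0 j hjS, zero_add, hres, hcol, hq, dotProduct_add, dotProduct_smul,
      residualProj_dot B hU, smul_eq_mul]
  have hp : 0 < pnorm ((suppF xs).erase l) xs := lt_of_le_of_ne (Real.sqrt_nonneg _) hne.symm
  have hp2 : 0 ≤ pnorm (suppF xs \ insert l S) xs := Real.sqrt_nonneg _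
  have hfin : (1 + δ) * pnorm (suppF xs \ insert l S) xs ≤ (1 + δ) / γ *
      (pnorm (suppF xs \ insert l S) xs / pnorm ((suppF xs).erase l) xs) * |xs l| := by
    calc (1 + δ) * pnorm (suppF xs \ insert l S) xs
        = (1 + δ) / γ * (pnorm (suppF xs \ insert l S) xs / pnorm ((suppF xs).erase l) xs) *
            (γ * pnorm ((suppF xs).erase l) xs) := by
          field_simp
      _ ≤ _ := by gcongr
  rw [huj]
  refine (abs_add_le _ _).trans ?_
  rw [abs_mul, add_mul]
  refine add_le_add ?_ (htail.trans hfin)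
  rw [mul_comm]
  gcongr
end
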